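/- Let p ∈ (0,1/2], r ∈ ℕ with r ≥ 1, and δ > 0. Suppose f : {0,1}^n → {0,1} is a monotone (r,δ)-global Boolean function. Then I_S(f) ≤ 8^r·δ for every nonempty S ⊆ [n] with |S| ≤ r. -/

import Mathlib

open Finset

namespace GlobalHC

variable {n : ℕ}

/-- Expectation with respect to the `p`-biased measure on `{0,1}^n`. -/
noncomputable def Ep (p : ℝ) (f : (Fin n → Bool) → ℝ) : ℝ :=
  ∑ x : Fin n → Bool, (∏ i, if x i then p else 1 - p) * f x

/-- The `r`-norm with respect to the `p`-biased measure. -/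
noncomputable def pnorm (p r : ℝ) (f : (Fin n → Bool) → ℝ) : ℝ :=
  (Ep p fun x => |f x| ^ r) ^ (1 / r)

/-- The `p`-biased character `χ_S`. -/
noncomputable def chi (p : ℝ) (S : Finset (Fin n)) (x : Fin n → Bool) : ℝ :=
  ∏ i ∈ S, ((if x i then (1 : ℝ) else 0) - p) / Real.sqrt (p * (1 - p))

/-- The `p`-biased Fourier coefficient `f̂(S)`. -/
noncomputable def coeff (p : ℝ) (f : (Fin n → Bool) → ℝ) (S : Finset (Fin n)) : ℝ :=
  Ep p fun x => f x * chi p S x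

/-- The derivative `D_S f = Σ_{T ⊇ S} f̂(T) χ_{T∖S}`. -/
noncomputable def derivS (p : ℝ) (S : Finset (Fin n)) (f : (Fin n → Bool) → ℝ) :
    (Fin n → Bool) → ℝ :=
  fun x => ∑ T ∈ Finset.univ.filter (fun T => S ⊆ T), coeff p f T * chi p (T \ S) x

/-- The generalised influence `I_S(f) = σ^{-2|S|} Σ_{T ⊇ S} f̂(T)²`. -/
noncomputable def genInf (p : ℝ) (S : Finset (Fin n)) (f : (Fin n → Bool) → ℝ) : ℝ :=
  (∑ T ∈ Finset.univ.filter (fun T => S ⊆ T), coeff p f T ^ 2) / (p * (1 - p)) ^ S.card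

/-- The noise operator `T_ρ f = Σ_S ρ^{|S|} f̂(S) χ_S`. -/
noncomputable def noise (p ρ : ℝ) (f : (Fin n → Bool) → ℝ) : (Fin n → Bool) → ℝ :=
  fun x => ∑ S : Finset (Fin n), ρ ^ S.card * coeff p f S * chi p S x

/-- The degree-`r` truncation `f^{≤ r}`. -/
noncomputable def trunc (p : ℝ) (r : ℕ) (f : (Fin n → Bool) → ℝ) : (Fin n → Bool) → ℝ :=
  fun x => ∑ S ∈ Finset.univ.filter (fun S : Finset (Fin n) => S.card ≤ r),
    coeff p f S * chi p S x

/-- The restriction `f_{J→1}` setting all coordinates in `J` to `1`. -/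
def restrict1 (J : Finset (Fin n)) (f : (Fin n → Bool) → ℝ) : (Fin n → Bool) → ℝ :=
  fun x => f (fun i => if i ∈ J then true else x i)

/-- `f` is `(r,δ)`-global (for the `p`-biased measure). -/
def IsGlobal (p r δ : ℝ) (f : (Fin n → Bool) → ℝ) : Prop :=
  ∀ J : Finset (Fin n), (J.card : ℝ) ≤ r → Ep p (restrict1 J f) ≤ Ep p f + δ

/-- The total influence `I[f] = Σ_i Pr_{μ_p}[f(x ⊕ e_i) ≠ f(x)]`. -/
noncomputable def totalInf (p : ℝ) (f : (Fin n → Bool) → ℝ) : ℝ :=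
  ∑ i : Fin n, Ep p fun x => if f (Function.update x i (!x i)) = f x then 0 else 1

/-- Noise stability `Stab_ρ(f) = Σ_S ρ^{|S|} f̂(S)²` (w.r.t. `μ_p`). -/
noncomputable def stab (p ρ : ℝ) (f : (Fin n → Bool) → ℝ) : ℝ :=
  ∑ S : Finset (Fin n), ρ ^ S.card * coeff p f S ^ 2

/-- `f` is monotone. -/
def Mono (f : (Fin n → Bool) → ℝ) : Prop :=
  ∀ x y : Fin n → Bool, (∀ i, x i ≤ y i) → f x ≤ f y


theorem Ep_add (p : ℝ) (f g : (Fin n → Bool) → ℝ) :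
    Ep p (fun x => f x + g x) = Ep p f + Ep p g := by
  simp only [Ep, mul_add, Finset.sum_add_distrib]

theorem Ep_sub (p : ℝ) (f g : (Fin n → Bool) → ℝ) :
    Ep p (fun x => f x - g x) = Ep p f - Ep p g := by
  simp only [Ep, mul_sub, Finset.sum_sub_distrib]

theorem Ep_smul (p c : ℝ) (f : (Fin n → Bool) → ℝ) :
    Ep p (fun x => c * f x) = c * Ep p f := by
  simp only [Ep, Finset.mul_sum]
  exact Finset.sum_congr rfl fun x _ => by ring

theorem Ep_sum {ι : Type*} (p : ℝ) (A : Finset ι) (f : ι → (Fin n → Bool) → ℝ) :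
    Ep p (fun x => ∑ a ∈ A, f a x) = ∑ a ∈ A, Ep p (f a) := by
  simp only [Ep, Finset.mul_sum]
  exact Finset.sum_comm

theorem Ep_le {p : ℝ} (hp : 0 ≤ p) (hp' : p ≤ 1) {f g : (Fin n → Bool) → ℝ}
    (h : ∀ x, f x ≤ g x) : Ep p f ≤ Ep p g := by
  unfold Ep
  refine Finset.sum_le_sum fun x _ => mul_le_mul_of_nonneg_left (h x) ?_
  refine Finset.prod_nonneg fun i _ => ?_
  split_ifs <;> linarith

theorem Ep_prod (p : ℝ) (φ : Fin n → Bool → ℝ) :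
    Ep p (fun x => ∏ i, φ i (x i)) = ∏ i, (p * φ i true + (1 - p) * φ i false) := by
  have h := Finset.prod_univ_sum (fun _ : Fin n => (Finset.univ : Finset Bool))
    (fun i b => (if b then p else 1 - p) * φ i b)
  simp only [Fintype.sum_bool, Fintype.piFinset_univ] at h
  simp only [Ep, ← Finset.prod_mul_distrib]
  simpa using h.symm

/-- Averaging over coordinate `i`. -/
theorem Ep_split (p : ℝ) (i : Fin n) (F : (Fin n → Bool) → ℝ) :
    Ep p F = Ep p (fun x => p * F (Function.update x i true)
      + (1 - p) * F (Function.update x i false)) := by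
  have inv : Function.Involutive (fun x : Fin n → Bool => Function.update x i (!x i)) := by
    intro x; simp
  have key : ∀ G : (Fin n → Bool) → ℝ,
      2 * Ep p G = ∑ x : Fin n → Bool, (∏ j ∈ Finset.univ.erase i, if x j then p else 1 - p) *
        (p * G (Function.update x i true) + (1 - p) * G (Function.update x i false)) := by
    intro G
    have h1 : Ep p G = ∑ x : Fin n → Bool,
        (∏ j, if (Function.update x i (!x i)) j then p else 1 - p)
          * G (Function.update x i (!x i)) := by
      unfold Ep
      exact (Equiv.sum_comp inv.toPerm
        (fun x => (∏ j, if x j then p else 1 - p) * G x)).symm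
    rw [two_mul]
    nth_rewrite 2 [h1]
    rw [Ep, ← Finset.sum_add_distrib]
    refine Finset.sum_congr rfl fun x _ => ?_
    rw [← Finset.mul_prod_erase _ _ (Finset.mem_univ i),
      ← Finset.mul_prod_erase _ (fun j => if (Function.update x i (!x i)) j then p else 1 - p)
        (Finset.mem_univ i)]
    have h2 : (∏ j ∈ Finset.univ.erase i, if (Function.update x i (!x i)) j then p else 1 - p)
        = ∏ j ∈ Finset.univ.erase i, if x j then p else 1 - p := by
      refine Finset.prod_congr rfl fun j hj => ?_
      rw [Function.update_of_ne (Finset.ne_of_mem_erase hj)]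
    rw [h2]
    have h3 : Function.update x i (x i) = x := Function.update_eq_self i x
    cases hx : x i <;> rw [hx] at h3 <;> simp [h3] <;> ring
  have h1 := key F
  have h2 := key (fun x => p * F (Function.update x i true)
      + (1 - p) * F (Function.update x i false))
  simp only [Function.update_idem] at h2
  have h3 : ∀ a : ℝ, p * a + (1 - p) * a = a := fun a => by ring
  simp only [h3] at h2
  linarith

theorem chi_ortho {p : ℝ} (hp : 0 < p) (hp' : p < 1) (T U : Finset (Fin n)) :
    Ep p (fun x => chi p T x * chi p U x) = if T = U then 1 else 0 := by
  have hs : Real.sqrt (p * (1 - p)) * Real.sqrt (p * (1 - p)) = p * (1 - p) :=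
    Real.mul_self_sqrt (by nlinarith)
  have hs0 : Real.sqrt (p * (1 - p)) ≠ 0 := (Real.sqrt_pos.2 (by nlinarith)).ne'
  have h1 : ∀ x : Fin n → Bool, chi p T x * chi p U x = ∏ i,
      (fun (i : Fin n) (b : Bool) =>
        (if i ∈ T then ((if b then (1 : ℝ) else 0) - p) / Real.sqrt (p * (1 - p)) else 1) *
        (if i ∈ U then ((if b then (1 : ℝ) else 0) - p) / Real.sqrt (p * (1 - p)) else 1)) i (x i) := by
    intro x
    simp only [chi, Finset.prod_mul_distrib, Finset.prod_ite_mem, Finset.univ_inter]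
  simp only [h1]
  rw [Ep_prod p (fun (i : Fin n) (b : Bool) =>
        (if i ∈ T then ((if b then (1 : ℝ) else 0) - p) / Real.sqrt (p * (1 - p)) else 1) *
        (if i ∈ U then ((if b then (1 : ℝ) else 0) - p) / Real.sqrt (p * (1 - p)) else 1))]
  by_cases h : T = U
  · subst h
    refine Eq.trans ?_ (if_pos rfl).symm
    refine Finset.prod_eq_one fun i _ => ?_
    by_cases hi : i ∈ T
    · simp only [hi, if_true, div_mul_div_comm, hs]
      have : p ≠ 0 := hp.ne'
      have : 1 - p ≠ 0 := by linarith
      simp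
      field_simp
      ring
    · simp [hi]
  · rw [if_neg h]
    have : ∃ i, ¬ (i ∈ T ↔ i ∈ U) := by
      by_contra hc
      push Not at hc
      exact h (Finset.ext hc)
    obtain ⟨i, hi⟩ := this
    refine Finset.prod_eq_zero (Finset.mem_univ i) ?_
    by_cases hT : i ∈ T <;> by_cases hU : i ∈ U <;> simp_all <;> field_simp <;> ring

theorem bessel {p : ℝ} (hp : 0 < p) (hp' : p < 1) (g : (Fin n → Bool) → ℝ) :
    ∑ U : Finset (Fin n), coeff p g U ^ 2 ≤ Ep p (fun x => g x ^ 2) := by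
  set P : (Fin n → Bool) → ℝ := fun x => ∑ U : Finset (Fin n), coeff p g U * chi p U x with hP
  have h0 : 0 ≤ Ep p (fun x => (g x - P x) ^ 2) := by
    have := Ep_le (n := n) hp.le hp'.le (f := fun x => 0 * 0) (g := fun x => (g x - P x) ^ 2)
      (fun x => by simpa using sq_nonneg (g x - P x))
    rw [Ep_smul] at this
    linarith
  have h1 : Ep p (fun x => g x * P x) = ∑ U : Finset (Fin n), coeff p g U ^ 2 := by
    have : ∀ x, g x * P x = ∑ U : Finset (Fin n), coeff p g U * (g x * chi p U x) := by
      intro x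
      rw [hP, Finset.mul_sum]
      exact Finset.sum_congr rfl fun U _ => by ring
    simp only [this, Ep_sum, Ep_smul]
    exact Finset.sum_congr rfl fun U _ => by rw [sq]; rfl
  have h2 : Ep p (fun x => P x * P x) = ∑ U : Finset (Fin n), coeff p g U ^ 2 := by
    have : ∀ x, P x * P x = ∑ U : Finset (Fin n), ∑ V : Finset (Fin n),
        coeff p g U * (coeff p g V * (chi p U x * chi p V x)) := by
      intro x
      rw [hP, Finset.sum_mul_sum]
      exact Finset.sum_congr rfl fun U _ => Finset.sum_congr rfl fun V _ => by ring
    simp only [this, Ep_sum, Ep_smul, chi_ortho hp hp']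
    simp [sq]
  have h3 : ∀ x, (g x - P x) ^ 2 = (g x ^ 2 - 2 * (g x * P x)) + P x * P x := fun x => by ring
  simp only [h3] at h0
  rw [Ep_add, Ep_sub, Ep_smul, h1, h2] at h0
  linarith

theorem chi_update (p : ℝ) (T : Finset (Fin n)) (i : Fin n) (hi : i ∉ T) (x : Fin n → Bool)
    (b : Bool) : chi p T (Function.update x i b) = chi p T x := by
  unfold chi
  refine Finset.prod_congr rfl fun j hj => ?_
  rw [Function.update_of_ne (by rintro rfl; exact hi hj)]

theorem coeff_deriv {p : ℝ} (hp : 0 < p) (hp' : p < 1) (g : (Fin n → Bool) → ℝ)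
    (T : Finset (Fin n)) (i : Fin n) (hi : i ∈ T) :
    coeff p g T = Real.sqrt (p * (1 - p)) *
      coeff p (fun x => g (Function.update x i true) - g (Function.update x i false))
        (T.erase i) := by
  have hs : Real.sqrt (p * (1 - p)) * Real.sqrt (p * (1 - p)) = p * (1 - p) :=
    Real.mul_self_sqrt (by nlinarith)
  have hs0 : Real.sqrt (p * (1 - p)) ≠ 0 := (Real.sqrt_pos.2 (by nlinarith)).ne'
  unfold coeff
  rw [Ep_split p i, ← Ep_smul]
  congr 1
  funext x
  have h : ∀ b : Bool, chi p T (Function.update x i b) =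
      ((if b then (1 : ℝ) else 0) - p) / Real.sqrt (p * (1 - p)) * chi p (T.erase i) x := by
    intro b
    rw [← chi_update p (T.erase i) i (Finset.notMem_erase i T) x b]
    unfold chi
    rw [← Finset.mul_prod_erase _ _ hi]
    simp
  rw [h, h]
  simp
  field_simp
  rw [sq, hs]
  ring

/-- Set all coordinates in `S` to `b`. -/
def setTo (S : Finset (Fin n)) (b : Bool) (x : Fin n → Bool) : Fin n → Bool :=
  fun i => if i ∈ S then b else x i

theorem exists_deriv {p : ℝ} (hp : 0 < p) (hp' : p < 1) (f : (Fin n → Bool) → ℝ)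
    (hmono : Mono f) (S : Finset (Fin n)) (hS : S.Nonempty) :
    ∃ g : (Fin n → Bool) → ℝ,
      (∀ T, S ⊆ T → coeff p f T = Real.sqrt (p * (1 - p)) ^ S.card * coeff p g (T \ S)) ∧
      (∀ x, |g x| ≤ 2 ^ S.card * (f (setTo S true x) - f (setTo S false x))) := by
  induction hS using Finset.Nonempty.cons_induction with
  | singleton i =>
    refine ⟨fun x => f (Function.update x i true) - f (Function.update x i false), ?_, ?_⟩
    · intro T hT
      rw [coeff_deriv hp hp' f T i (by simpa using hT)]
      simp [Finset.sdiff_singleton_eq_erase]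
    · intro x
      have h : ∀ b, setTo {i} b x = Function.update x i b := by
        intro b; funext j; by_cases hj : j = i
        · subst hj; simp [setTo]
        · simp [setTo, hj]
      have hm : f (Function.update x i false) ≤ f (Function.update x i true) := by
        apply hmono
        intro j; by_cases hj : j = i
        · subst hj; simp
        · simp [hj]
      simp only [h]
      rw [abs_of_nonneg (by linarith)]
      simp
      linarith
  | cons i S hi hS ih =>
    obtain ⟨g, hg1, hg2⟩ := ih
    refine ⟨fun x => g (Function.update x i true) - g (Function.update x i false), ?_, ?_⟩
    · intro T hT
      rw [Finset.cons_subset] at hT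
      rw [hg1 T hT.2, coeff_deriv hp hp' g (T \ S) i (by simp [hT.1, hi]), Finset.card_cons, pow_succ]
      have : (T \ S).erase i = T \ Finset.cons i S hi := by
        ext j; simp; tauto
      rw [this]; ring
    · intro x
      have a1 := hg2 (Function.update x i true)
      have a2 := hg2 (Function.update x i false)
      have hle : ∀ y z : Fin n → Bool, (∀ j, y j ≤ z j) → f y ≤ f z := hmono
      have b1 : f (setTo S true (Function.update x i true)) ≤ f (setTo (Finset.cons i S hi) true x) := by
        apply hle; intro j
        by_cases hj : j = i
        · subst hj; simp [setTo]
        · simp [setTo, hj]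
      have b2 : f (setTo S true (Function.update x i false)) ≤ f (setTo (Finset.cons i S hi) true x) := by
        apply hle; intro j
        by_cases hj : j = i
        · subst hj; simp [setTo]
        · simp [setTo, hj]
      have b3 : f (setTo (Finset.cons i S hi) false x) ≤ f (setTo S false (Function.update x i true)) := by
        apply hle; intro j
        by_cases hj : j = i
        · subst hj; simp [setTo]
        · simp [setTo, hj]
      have b4 : f (setTo (Finset.cons i S hi) false x) ≤ f (setTo S false (Function.update x i false)) := by
        apply hle; intro j
        by_cases hj : j = i
        · subst hj; simp [setTo]
        · simp [setTo, hj]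
      have a3 := abs_sub (g (Function.update x i true)) (g (Function.update x i false))
      rw [Finset.card_cons, pow_succ]
      have hpos : (0 : ℝ) < 2 ^ S.card := by positivity
      have c1 := mul_le_mul_of_nonneg_left (sub_le_sub b1 b3) hpos.le
      have c2 := mul_le_mul_of_nonneg_left (sub_le_sub b2 b4) hpos.le
      simp only
      linarith

theorem Ep_zero_indep (p : ℝ) (h : (Fin n → Bool) → ℝ) (S : Finset (Fin n))
    (hh : ∀ i ∈ S, ∀ x b, h (Function.update x i b) = h x) :
    Ep p (fun x => if ∀ i ∈ S, x i = false then h x else 0) = (1 - p) ^ S.card * Ep p h := by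
  induction S using Finset.induction_on with
  | empty => simp
  | insert i S hi ih =>
    rw [Ep_split p i]
    have hc : ∀ x : Fin n → Bool, ∀ b, (∀ j ∈ S, Function.update x i b j = false) ↔
        ∀ j ∈ S, x j = false := by
      intro x b
      refine forall₂_congr fun j hj => ?_
      rw [Function.update_of_ne (by rintro rfl; exact hi hj)]
    simp only [Finset.forall_mem_insert, Function.update_self, hc,
      hh i (Finset.mem_insert_self i S)]
    simp only [Bool.true_eq_false, false_and, if_false, true_and, mul_zero, zero_add]
    rw [Ep_smul, ih (fun j hj => hh j (Finset.mem_insert_of_mem hj)),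
      Finset.card_insert_of_notMem hi, pow_succ]
    ring

/-- monotone global Boolean functions have small generalised influences. -/
theorem statement5 {n : ℕ} (p δ : ℝ) (r : ℕ) (hp : 0 < p) (hp' : p ≤ 1/2)
    (hr : 1 ≤ r) (hδ : 0 < δ)
    (f : (Fin n → Bool) → ℝ) (hbool : ∀ x, f x = 0 ∨ f x = 1)
    (hmono : Mono f) (hglob : IsGlobal p (r : ℝ) δ f) :
    ∀ S : Finset (Fin n), S.Nonempty → S.card ≤ r → genInf p S f ≤ 8 ^ r * δ := by
  intro S hS hSr
  have hp1 : p < 1 := by linarith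
  have hle : ∀ y z : Fin n → Bool, (∀ j, y j ≤ z j) → f y ≤ f z := hmono
  obtain ⟨g, hg1, hg2⟩ := exists_deriv hp hp1 f hmono S hS
  set h : (Fin n → Bool) → ℝ := fun x => f (setTo S true x) - f (setTo S false x) with hh
  have hpp : 0 < p * (1 - p) := by nlinarith
  -- Fourier side
  have e1 : genInf p S f ≤ Ep p (fun x => g x ^ 2) := by
    unfold genInf
    rw [div_le_iff₀ (by positivity)]
    have e2 : ∑ T ∈ Finset.univ.filter (fun T => S ⊆ T), coeff p f T ^ 2 =
        (∑ T ∈ Finset.univ.filter (fun T => S ⊆ T), coeff p g (T \ S) ^ 2)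
          * (p * (1 - p)) ^ S.card := by
      rw [Finset.sum_mul]
      refine Finset.sum_congr rfl fun T hT => ?_
      rw [hg1 T (by simpa using hT), mul_pow, ← pow_mul, mul_comm S.card 2, pow_mul,
        Real.sq_sqrt hpp.le]
      ring
    rw [e2]
    refine mul_le_mul_of_nonneg_right (le_trans ?_ (bessel hp hp1 g)) (by positivity)
    rw [← Finset.sum_image (s := Finset.univ.filter (fun T => S ⊆ T)) (g := fun T => T \ S)
      (f := fun U => coeff p g U ^ 2)]
    · exact Finset.sum_le_sum_of_subset_of_nonneg (Finset.subset_univ _)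
        fun _ _ _ => sq_nonneg _
    · intro T hT U hU hTU
      simp only [Finset.coe_filter, Finset.mem_univ, true_and, Set.mem_setOf_eq] at hT hU
      have hTU' : T \ S = U \ S := hTU
      rw [← Finset.sdiff_union_of_subset hT, ← Finset.sdiff_union_of_subset hU, hTU']
  have hh0 : ∀ x, 0 ≤ h x := by
    intro x
    have : f (setTo S false x) ≤ f (setTo S true x) := by
      apply hle; intro j; by_cases hj : j ∈ S <;> simp [setTo, hj]
    simp only [hh]; linarith
  have hh1 : ∀ x, h x ≤ 1 := by
    intro x
    simp only [hh]
    rcases hbool (setTo S true x) with a | a <;> rcases hbool (setTo S false x) with b | b <;>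
      rw [a, b] <;> norm_num
  have e3 : Ep p (fun x => g x ^ 2) ≤ 4 ^ S.card * Ep p h := by
    rw [← Ep_smul]
    refine Ep_le hp.le hp1.le fun x => ?_
    have a1 : g x ^ 2 ≤ (2 ^ S.card * h x) ^ 2 := by
      rw [← sq_abs]
      exact pow_le_pow_left₀ (abs_nonneg _) (hg2 x) 2
    have a2 : ((2 : ℝ) ^ S.card * h x) ^ 2 = 4 ^ S.card * (h x * h x) := by
      rw [mul_pow, ← pow_mul, mul_comm S.card 2, pow_mul]; norm_num; ring
    have a3 : h x * h x ≤ h x := by nlinarith [hh0 x, hh1 x]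
    calc g x ^ 2 ≤ _ := a1
      _ = _ := a2
      _ ≤ _ := mul_le_mul_of_nonneg_left a3 (by positivity)
  -- globalness
  have e4 : (1 - p) ^ S.card * Ep p h ≤ δ := by
    rw [← Ep_zero_indep p h S ?_]
    · have g1 := hglob S (by exact_mod_cast hSr)
      have g2 : Ep p (fun x => if ∀ i ∈ S, x i = false then h x else 0) ≤
          Ep p (fun x => restrict1 S f x - f x) := by
        refine Ep_le hp.le hp1.le fun x => ?_
        have r1 : restrict1 S f x = f (setTo S true x) := rfl
        rw [r1]
        split_ifs with hx
        · have : setTo S false x = x := by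
            funext j; by_cases hj : j ∈ S
            · simp [setTo, hj, hx j hj]
            · simp [setTo, hj]
          simp only [hh, this]; exact le_rfl
        · have : f x ≤ f (setTo S true x) := by
            apply hle; intro j; by_cases hj : j ∈ S <;> simp [setTo, hj, Bool.le_true]
          linarith
      rw [Ep_sub] at g2
      linarith
    · intro i hi x b
      have : ∀ c, setTo S c (Function.update x i b) = setTo S c x := by
        intro c; funext j; by_cases hj : j ∈ S
        · simp [setTo, hj]
        · have : j ≠ i := by rintro rfl; exact hj hi
          simp [setTo, hj, this]
      simp only [hh, this]
  have hE0 : 0 ≤ Ep p h := by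
    have := Ep_le (n := n) hp.le hp1.le (f := fun x => 0 * 0) (g := h)
      (fun x => by simpa using hh0 x)
    rw [Ep_smul] at this
    linarith
  have e5 : Ep p h ≤ 2 ^ S.card * δ := by
    have q1 : ((1 : ℝ) / 2) ^ S.card ≤ (1 - p) ^ S.card :=
      pow_le_pow_left₀ (by norm_num) (by linarith) _
    have q2 := (mul_le_mul_of_nonneg_right q1 hE0).trans e4
    rw [one_div, inv_pow] at q2
    rwa [inv_mul_le_iff₀ (by positivity)] at q2
  calc genInf p S f ≤ _ := e1
    _ ≤ _ := e3
    _ ≤ 4 ^ S.card * (2 ^ S.card * δ) := mul_le_mul_of_nonneg_left e5 (by positivity)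
    _ = 8 ^ S.card * δ := by rw [← mul_assoc, ← mul_pow]; norm_num
    _ ≤ 8 ^ r * δ := by
      refine mul_le_mul_of_nonneg_right ?_ hδ.le
      exact pow_le_pow_right₀ (by norm_num) hSr

end GlobalHC
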